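/- For every nonnegative integer m and every integer k, the series Σ_{n=0}^{∞} b_{n+m} · (kiπ)ⁿ/n! converges and equals b_m if k is even, and equals e^{−2} · b̃_m if k is odd. -/

import Mathlib

/-- Stirling numbers of the second kind. -/
def stirling2 : ℕ → ℕ → ℕ
  | 0, 0 => 1
  | 0, _ + 1 => 0
  | _ + 1, 0 => 0
  | n + 1, k + 1 => (k + 1) * stirling2 n (k + 1) + stirling2 n k

/-- The Bell numbers bₙ = Σ_{k=0}^{n} S(n,k). -/
def bell (n : ℕ) : ℕ := ∑ k ∈ Finset.range (n + 1), stirling2 n k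

/-- The complementary Bell numbers b̃ₙ = Σ_{k=0}^{n} S(n,k)(−1)ᵏ. -/
def cbell (n : ℕ) : ℤ := ∑ k ∈ Finset.range (n + 1), (stirling2 n k : ℤ) * (-1) ^ k

/-!
The function `z ↦ exp (x * exp z)` is entire, and the recurrence `φₙ₊₁ = X * (φₙ + φₙ')` identifies
its `n`-th derivative as `φₙ(x * exp z) * exp (x * exp z)`. Expanding the `m`-th derivative in its
Taylor series at the origin and dividing by `exp x` gives
`∑ φₙ₊ₘ(x) * zⁿ / n! = φₘ(x * exp z) * exp (x * (exp z - 1))`. At `x = 1` and `z = k * I * π` the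
argument `x * exp z` is `(-1) ^ k`.
-/

open Complex Polynomial

theorem stirling2_eq_zero_of_lt {n k : ℕ} (h : n < k) : stirling2 n k = 0 := by
  induction n generalizing k with
  | zero =>
    obtain ⟨k, rfl⟩ := Nat.exists_eq_add_one.2 h
    rfl
  | succ n ih =>
    obtain ⟨k, rfl⟩ := Nat.exists_eq_add_one.2 (Nat.zero_lt_of_lt h)
    rw [stirling2, ih (by lia), ih (by lia), mul_zero]

section ExponentialPolynomial

/-- The exponential polynomial `φₙ = ∑ S(n, k) Xᵏ` (also called the Touchard polynomial), over an
arbitrary coefficient semiring. Its values at `1` and `-1` are the Bell and complementary Bell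
numbers. -/
noncomputable def exponentialPolynomial (R : Type*) [Semiring R] (n : ℕ) : R[X] :=
  ∑ k ∈ Finset.range (n + 1), monomial k (stirling2 n k : R)

variable (R : Type*)

theorem exponentialPolynomial_coeff [Semiring R] (n k : ℕ) :
    (exponentialPolynomial R n).coeff k = stirling2 n k := by
  simp only [exponentialPolynomial, finsetSum_coeff, coeff_monomial, Finset.sum_ite_eq',
    Finset.mem_range, ite_eq_left_iff, not_lt]
  intro h
  rw [stirling2_eq_zero_of_lt h, Nat.cast_zero]

theorem exponentialPolynomial_succ [Semiring R] (n : ℕ) :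
    exponentialPolynomial R (n + 1) =
      X * (exponentialPolynomial R n + derivative (exponentialPolynomial R n)) := by
  ext k
  cases k with
  | zero => simp [exponentialPolynomial_coeff, stirling2]
  | succ k =>
    simp only [coeff_X_mul, coeff_add, coeff_derivative, exponentialPolynomial_coeff, stirling2]
    push_cast
    rw [add_comm, ← Nat.cast_succ, Nat.cast_comm]

theorem exponentialPolynomial_eval_one [Semiring R] (n : ℕ) :
    (exponentialPolynomial R n).eval 1 = bell n := by
  simp [exponentialPolynomial, eval_finsetSum, bell]

theorem exponentialPolynomial_eval_neg_one [Ring R] (n : ℕ) :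
    (exponentialPolynomial R n).eval (-1) = cbell n := by
  simp [exponentialPolynomial, eval_finsetSum, cbell]

end ExponentialPolynomial

theorem hasDerivAt_eval_mul_exp (p : ℂ[X]) (w : ℂ) :
    HasDerivAt (fun w ↦ p.eval w * exp w) ((p + derivative p).eval w * exp w) w := by
  rw [eval_add, add_comm, add_mul]
  exact (p.hasDerivAt w).mul (hasDerivAt_exp w)

theorem hasDerivAt_exponentialPolynomial_eval_mul_exp (n : ℕ) (x z : ℂ) :
    HasDerivAt (fun z ↦ (exponentialPolynomial ℂ n).eval (x * exp z) * exp (x * exp z))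
      ((exponentialPolynomial ℂ (n + 1)).eval (x * exp z) * exp (x * exp z)) z := by
  convert! (hasDerivAt_eval_mul_exp (exponentialPolynomial ℂ n) (x * exp z)).comp z
    ((hasDerivAt_exp z).const_mul x) using 1
  rw [exponentialPolynomial_succ, eval_mul, eval_X]
  ring

theorem iteratedDeriv_exp_mul_exp (n : ℕ) (x : ℂ) :
    iteratedDeriv n (fun z ↦ exp (x * exp z)) =
      fun z ↦ (exponentialPolynomial ℂ n).eval (x * exp z) * exp (x * exp z) := by
  induction n with
  | zero => simp [exponentialPolynomial, stirling2]
  | succ n ih =>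
    rw [iteratedDeriv_succ, ih]
    exact funext fun z ↦ (hasDerivAt_exponentialPolynomial_eval_mul_exp n x z).deriv

theorem hasSum_taylorSeries_iteratedDeriv_of_entire {E : Type*} [NormedAddCommGroup E]
    [NormedSpace ℂ E] [CompleteSpace E] {f : ℂ → E} (hf : Differentiable ℂ f) (m : ℕ) (c z : ℂ) :
    HasSum (fun n : ℕ ↦ (n.factorial : ℂ)⁻¹ • (z - c) ^ n • iteratedDeriv (n + m) f c)
      (iteratedDeriv m f z) := by
  have hfm : Differentiable ℂ (iteratedDeriv m f) :=
    hf.contDiff.differentiable_iteratedDeriv m (WithTop.coe_lt_top _)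
  simpa only [iteratedDeriv_eq_iterate, ← Function.iterate_add_apply] using
    hasSum_taylorSeries_of_entire hfm c z

theorem exp_int_mul_I_mul_pi (k : ℤ) : exp (k * I * Real.pi) = (-1) ^ k := by
  rw [mul_assoc, exp_int_mul, mul_comm I, exp_pi_mul_I]

theorem stmt4_general (m : ℕ) (x z : ℂ) :
    HasSum (fun n : ℕ ↦ (exponentialPolynomial ℂ (n + m)).eval x * z ^ n / n.factorial)
      ((exponentialPolynomial ℂ m).eval (x * exp z) * exp (x * (exp z - 1))) := by
  have entire : Differentiable ℂ (fun z ↦ exp (x * exp z)) := by fun_prop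
  have taylor := (hasSum_taylorSeries_iteratedDeriv_of_entire entire m 0 z).mul_right (exp (-x))
  simp only [iteratedDeriv_exp_mul_exp, exp_zero, mul_one, sub_zero, smul_eq_mul] at taylor
  convert! taylor using 1
  · funext n
    simp only [mul_assoc, ← exp_add, add_neg_cancel, exp_zero]
    ring
  · rw [mul_assoc, ← exp_add, mul_sub_one, sub_eq_add_neg]

theorem stmt4 (m : ℕ) (k : ℤ) :
    HasSum
      (fun n : ℕ =>
        (bell (n + m) : ℂ) * ((k : ℂ) * Complex.I * (Real.pi : ℂ)) ^ n / (n.factorial : ℂ))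
      (if Even k then (bell m : ℂ) else Complex.exp (-2) * (cbell m : ℂ)) := by
  have h := stmt4_general m 1 (k * I * Real.pi)
  simp only [exp_int_mul_I_mul_pi, one_mul, exponentialPolynomial_eval_one] at h
  split_ifs with hk
  · simpa only [hk.neg_one_zpow, exponentialPolynomial_eval_one, sub_self, exp_zero,
      mul_one] using h
  · rwa [(Int.not_even_iff_odd.1 hk).neg_one_zpow, exponentialPolynomial_eval_neg_one,
      mul_comm (cbell m : ℂ), show (-1 - 1 : ℂ) = -2 by norm_num] at h
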